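/- Let y_0 be a nondominated point of (P(0)), let Δ ∈ Γ_{y_0}, and assume the Slater condition. Then Δ is a Lagrange multiplier of (P(0)) at y_0: writing U_Δ := ∪_{x∈Ω}(F(x)+Δ(G(x)+Z_+)), one has y_0 ∈ cl(U_Δ) and U_Δ ∩ (y_0−Y_+) ⊆ y_0+Y_+. -/

import Mathlib

open Pointwise Filter Topology

namespace Paper

section Defs

variable {E : Type*} [NormedAddCommGroup E] [NormedSpace ℝ E]

/-- The cone hull of a set: all nonnegative multiples of its elements. -/
def coneHull (A : Set E) : Set E := {x | ∃ r : ℝ, 0 ≤ r ∧ ∃ a ∈ A, x = r • a}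

/-- A cone: a nonempty set closed under multiplication by nonnegative scalars. -/
def IsCone (K : Set E) : Prop := K.Nonempty ∧ ∀ r : ℝ, 0 ≤ r → ∀ x ∈ K, r • x ∈ K

/-- A pointed cone: `K ∩ (-K) = {0}`. -/
def IsPointed (K : Set E) : Prop := K ∩ (-K) = {0}

/-- A proper cone: `{0} ≠ K ≠ E`. -/
def IsProper (K : Set E) : Prop := K ≠ {0} ∧ K ≠ Set.univ

/-- A solid cone: nonempty interior. -/
def IsSolid (K : Set E) : Prop := (interior K).Nonempty

/-- The contingent cone to `A` at `w`. -/
def contingentCone (A : Set E) (w : E) : Set E :=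
  {v | Filter.liminf (fun h : ℝ => Metric.infDist (w + h • v) A / h) (𝓝[>] (0:ℝ)) = 0}

end Defs

section SV

variable {X Y Z : Type*}
  [NormedAddCommGroup X] [NormedSpace ℝ X]
  [NormedAddCommGroup Y] [NormedSpace ℝ Y]
  [NormedAddCommGroup Z] [NormedSpace ℝ Z]

/-- The graph of a set-valued map. -/
def graph (Δ : Z → Set Y) : Set (Z × Y) := {p | p.2 ∈ Δ p.1}

/-- The image of a set by a set-valued map. -/
def imageSet (Δ : Z → Set Y) (A : Set Z) : Set Y := ⋃ w ∈ A, Δ w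

/-- The feasible set map `S(z) = {x ∈ Ω : G(x) ∩ (z - Z₊) ≠ ∅}`. -/
def Smap (Ω : Set X) (G : X → Set Z) (Zp : Set Z) (z : Z) : Set X :=
  {x | x ∈ Ω ∧ (G x ∩ ({z} - Zp)).Nonempty}

/-- The value map `V(z) = F(S(z))`. -/
def Vmap (Ω : Set X) (F : X → Set Y) (G : X → Set Z) (Zp : Set Z) (z : Z) : Set Y :=
  ⋃ x ∈ Smap Ω G Zp z, F x

/-- The map `(V + Y₊)(z) = V(z) + Y₊`. -/
def VplusMap (Ω : Set X) (F : X → Set Y) (G : X → Set Z) (Zp : Set Z) (Yp : Set Y)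
    (z : Z) : Set Y :=
  Vmap Ω F G Zp z + Yp

/-- The graph of `V + Y₊`. -/
def GraphVplus (Ω : Set X) (F : X → Set Y) (G : X → Set Z) (Zp : Set Z) (Yp : Set Y) :
    Set (Z × Y) :=
  {p : Z × Y | p.2 ∈ Vmap Ω F G Zp p.1 + Yp}

/-- Minimal points of a set `A` with respect to the cone `Yp`. -/
def MinSet (Yp : Set Y) (A : Set Y) : Set Y :=
  {a ∈ A | A ∩ ({a} - Yp) ⊆ {a} + Yp}

/-- The marginal map `M(z) = Min(V(z))`. -/
def Mmap (Ω : Set X) (F : X → Set Y) (G : X → Set Z) (Zp : Set Z) (Yp : Set Y)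
    (z : Z) : Set Y :=
  MinSet Yp (Vmap Ω F G Zp z)

/-- `y₀` is a nondominated point of `(P(0))`. -/
def Nondominated (Ω : Set X) (F : X → Set Y) (G : X → Set Z) (Zp : Set Z) (Yp : Set Y)
    (y0 : Y) : Prop :=
  y0 ∈ closure (Vmap Ω F G Zp 0) ∧
    Vmap Ω F G Zp 0 ∩ ({y0} - Yp) ⊆ {y0} + Yp

/-- `y₀` is a minimal point of `(P(0))`. -/
def MinimalPoint (Ω : Set X) (F : X → Set Y) (G : X → Set Z) (Zp : Set Z) (Yp : Set Y)
    (y0 : Y) : Prop :=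
  y0 ∈ Vmap Ω F G Zp 0 ∧
    Vmap Ω F G Zp 0 ∩ ({y0} - Yp) ⊆ {y0} + Yp

/-- The set `S_{Y₊}(y₀)` of separating pairs of continuous linear functionals. -/
def Sdual (Ω : Set X) (F : X → Set Y) (G : X → Set Z) (Zp : Set Z) (Yp : Set Y) (y0 : Y) :
    Set ((Z →L[ℝ] ℝ) × (Y →L[ℝ] ℝ)) :=
  {p | (∀ z' ∈ -Zp, ∀ y' ∈ ({y0} : Set Y) - Yp, p.1 z' + p.2 y' ≤ p.2 y0) ∧
       (∀ q ∈ GraphVplus Ω F G Zp Yp, p.2 y0 ≤ p.1 q.1 + p.2 q.2)}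

/-- `P(Z,Y)`: closed convex processes with full domain. -/
def PZY : Set (Z → Set Y) :=
  {Δ | IsClosed (graph Δ) ∧ Convex ℝ (graph Δ) ∧ IsCone (graph Δ) ∧ ∀ z, (Δ z).Nonempty}

/-- The set `Λ_{(z*,y*)}` of processes associated to `(z*,y*)`. -/
def Lambda (zs : Z →L[ℝ] ℝ) (ys : Y →L[ℝ] ℝ) : Set (Z → Set Y) :=
  {Δ | Δ ∈ PZY ∧ graph Δ \ {0} ⊆ {p : Z × Y | 0 < -(zs p.1) + ys p.2}}

/-- The set `Γ_{y₀}` of processes associated to `y₀`. -/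
def Gamma (Ω : Set X) (F : X → Set Y) (G : X → Set Z) (Zp : Set Z) (Yp : Set Y) (y0 : Y) :
    Set (Z → Set Y) :=
  ⋃ p ∈ Sdual Ω F G Zp Yp y0 \ {0}, Lambda p.1 p.2

/-- The Slater constraint qualification. -/
def Slater (Ω : Set X) (F : X → Set Y) (G : X → Set Z) (Zp : Set Z) : Prop :=
  ∃ x1 ∈ Ω, (F x1).Nonempty ∧ (G x1 ∩ (-interior Zp)).Nonempty

/-- `Ψ(Δ) = ∪_{x∈Ω}(F(x) + Δ(G(x)+Z₊))`. -/
def Umap (Ω : Set X) (F : X → Set Y) (G : X → Set Z) (Zp : Set Z) (Δ : Z → Set Y) : Set Y :=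
  ⋃ x ∈ Ω, (F x + imageSet Δ (G x + Zp))

/-- The dual map `Φ(Δ)`: nondominated points of the closure of `Ψ(Δ)`. -/
def Phi (Ω : Set X) (F : X → Set Y) (G : X → Set Z) (Zp : Set Z) (Yp : Set Y)
    (Δ : Z → Set Y) : Set Y :=
  {y ∈ closure (Umap Ω F G Zp Δ) | Umap Ω F G Zp Δ ∩ ({y} - Yp) ⊆ {y} + Yp}

/-- `Δ` is a Lagrange multiplier of `(P(0))` at `y₀`. -/
def LagrangeMultiplier (Ω : Set X) (F : X → Set Y) (G : X → Set Z) (Zp : Set Z) (Yp : Set Y)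
    (Δ : Z → Set Y) (y0 : Y) : Prop :=
  y0 ∈ closure (Umap Ω F G Zp Δ) ∧ Umap Ω F G Zp Δ ∩ ({y0} - Yp) ⊆ {y0} + Yp

/-- The graph of the Lagrange process of `(P(0))` at `y₀`. -/
def GraphLagrange (Ω : Set X) (F : X → Set Y) (G : X → Set Z) (Zp : Set Z) (Yp : Set Y)
    (y0 : Y) : Set (Z × Y) :=
  {p : Z × Y | ∀ q ∈ Sdual Ω F G Zp Yp y0, q.1 p.1 ≤ q.2 p.2}

/-- The Lagrange process of `(P(0))` at `y₀`, as a set-valued map. -/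
def Lagrange (Ω : Set X) (F : X → Set Y) (G : X → Set Z) (Zp : Set Z) (Yp : Set Y) (y0 : Y)
    (z : Z) : Set Y :=
  {y | (z, y) ∈ GraphLagrange Ω F G Zp Yp y0}

/-- The contingent derivative of a set-valued map `H` at `(z₀, y₀)`. -/
def contingentDeriv (H : Z → Set Y) (z0 : Z) (y0 : Y) (z : Z) : Set Y :=
  {y | (z, y) ∈ contingentCone (graph H) (z0, y0)}

/-- The S-derivative (Shi derivative) of a set-valued map `H` at `(z₀, y₀)`. -/
def Sderiv (H : Z → Set Y) (z0 : Z) (y0 : Y) (z : Z) : Set Y :=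
  {y | ∃ (h : ℕ → ℝ) (zn : ℕ → Z) (yn : ℕ → Y),
    (∀ n, 0 < h n) ∧ Filter.Tendsto zn Filter.atTop (𝓝 z) ∧
    Filter.Tendsto yn Filter.atTop (𝓝 y) ∧
    Filter.Tendsto (fun n => h n • zn n) Filter.atTop (𝓝 (0:Z)) ∧
    ∀ n, y0 + h n • yn n ∈ H (z0 + h n • zn n)}

/-- The standing assumptions of the paper: `Y₊`, `Z₊` proper solid convex cones, `Ω` nonempty
convex, `F` is `Y₊`-convex and `G` is `Z₊`-convex. -/
def StandingHyp (Ω : Set X) (F : X → Set Y) (G : X → Set Z) (Zp : Set Z) (Yp : Set Y) : Prop :=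
  IsCone Yp ∧ IsProper Yp ∧ IsSolid Yp ∧ Convex ℝ Yp ∧
  IsCone Zp ∧ IsProper Zp ∧ IsSolid Zp ∧ Convex ℝ Zp ∧
  Ω.Nonempty ∧ Convex ℝ Ω ∧
  Convex ℝ {p : X × Y | p.1 ∈ Ω ∧ p.2 ∈ F p.1 + Yp} ∧
  Convex ℝ {p : X × Z | p.1 ∈ Ω ∧ p.2 ∈ G p.1 + Zp}

end SV

variable {X Y Z : Type*}
  [NormedAddCommGroup X] [NormedSpace ℝ X]
  [NormedAddCommGroup Y] [NormedSpace ℝ Y]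
  [NormedAddCommGroup Z] [NormedSpace ℝ Z]

/-!
The set `U_Δ` is the union over `z` of `V(z) + Δ(z)`. A pair `(z*, y*)` in `S_{Y₊}(y₀)` satisfies
`y*(y₀) ≤ z*(z) + y*(y)` for `y ∈ V(z)`, and `z*(z) < y*(d)` for nonzero `(z, d)` in the graph
of `Δ`; adding these, `y* > y*(y₀)` at every point `y + d` of `U_Δ` with `(z, d) ≠ 0`. Since
`y* ≤ y*(y₀)` on `y₀ - Y₊`, the only points of `U_Δ` there have `(z, d) = 0`, so they already
lie in `V(0)`.
-/

theorem IsCone.zero_mem {E : Type*} [NormedAddCommGroup E] [NormedSpace ℝ E] {K : Set E}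
    (hK : IsCone K) : 0 ∈ K := by
  obtain ⟨x, hx⟩ := hK.1
  simpa only [zero_smul] using hK.2 0 le_rfl x hx

section

variable {X Y Z : Type*} [NormedAddCommGroup Z]
  {Ω : Set X} {F : X → Set Y} {G : X → Set Z} {Zp : Set Z} {x : X} {y : Y} {z : Z}

theorem mem_smap : x ∈ Smap Ω G Zp z ↔ x ∈ Ω ∧ z ∈ G x + Zp := by
  refine and_congr_right fun _ => ⟨?_, ?_⟩
  · rintro ⟨g, hg, _, rfl, k, hk, rfl⟩
    exact ⟨_, hg, k, hk, sub_add_cancel _ _⟩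
  · rintro ⟨g, hg, k, hk, rfl⟩
    exact ⟨g, hg, _, rfl, k, hk, add_sub_cancel_right _ _⟩

theorem mem_vmap : y ∈ Vmap Ω F G Zp z ↔ ∃ x ∈ Ω, z ∈ G x + Zp ∧ y ∈ F x := by
  simp only [Vmap, Set.mem_iUnion, mem_smap, exists_prop, and_assoc]

variable [NormedAddCommGroup Y] {Δ : Z → Set Y}

theorem umap_eq_iUnion_vmap_add : Umap Ω F G Zp Δ = ⋃ z, (Vmap Ω F G Zp z + Δ z) := by
  ext u
  simp only [Umap, imageSet, Set.mem_iUnion, Set.mem_add (a := u), mem_vmap, exists_prop]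
  constructor
  · rintro ⟨x, hx, y, hy, d, ⟨z, hz, hd⟩, hu⟩
    exact ⟨z, y, ⟨x, hx, hz, hy⟩, d, hd, hu⟩
  · rintro ⟨z, y, ⟨x, hx, hz, hy⟩, d, hd, hu⟩
    exact ⟨x, hx, y, hy, d, ⟨z, hz, hd⟩, hu⟩

theorem vmap_zero_subset_umap (hΔ0 : 0 ∈ graph Δ) : Vmap Ω F G Zp 0 ⊆ Umap Ω F G Zp Δ := by
  rw [umap_eq_iUnion_vmap_add]
  exact fun y hy => Set.mem_iUnion.2 ⟨0, y, hy, 0, hΔ0, add_zero y⟩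

variable [NormedSpace ℝ Y] [NormedSpace ℝ Z] {Yp : Set Y} {y0 : Y}
  {p : (Z →L[ℝ] ℝ) × (Y →L[ℝ] ℝ)}

theorem apply_le_of_mem_sdual (hp : p ∈ Sdual Ω F G Zp Yp y0) (hZp : 0 ∈ Zp)
    (hy : y ∈ {y0} - Yp) : p.2 y ≤ p.2 y0 := by
  simpa only [map_zero, zero_add] using hp.1 0 (by simpa only [Set.mem_neg, neg_zero]) y hy

theorem apply_le_add_of_mem_sdual (hp : p ∈ Sdual Ω F G Zp Yp y0) (hYp : 0 ∈ Yp)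
    (hy : y ∈ Vmap Ω F G Zp z) : p.2 y0 ≤ p.1 z + p.2 y :=
  hp.2 (z, y) ⟨y, hy, 0, hYp, add_zero y⟩

theorem umap_inter_sub_subset_vmap_zero (hYp : 0 ∈ Yp) (hZp : 0 ∈ Zp)
    (hp : p ∈ Sdual Ω F G Zp Yp y0)
    (hΔ : graph Δ \ {0} ⊆ {q : Z × Y | 0 < -(p.1 q.1) + p.2 q.2}) :
    Umap Ω F G Zp Δ ∩ ({y0} - Yp) ⊆ Vmap Ω F G Zp 0 := by
  rw [umap_eq_iUnion_vmap_add]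
  rintro u ⟨hu, hu_le⟩
  obtain ⟨z, y, hy, d, hd, rfl⟩ := Set.mem_iUnion.1 hu
  have hzd : (z, d) = 0 := by
    by_contra hne
    have hpos : 0 < -(p.1 z) + p.2 d := hΔ ⟨hd, hne⟩
    have hle : p.2 y + p.2 d ≤ p.2 y0 := by
      simpa only [map_add] using apply_le_of_mem_sdual hp hZp hu_le
    linarith [apply_le_add_of_mem_sdual hp hYp hy]
  obtain ⟨rfl, rfl⟩ := Prod.mk_eq_zero.1 hzd
  simpa only [add_zero] using hy

theorem stmt_9_general (hYp : 0 ∈ Yp) (hZp : 0 ∈ Zp) (hy0 : Nondominated Ω F G Zp Yp y0)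
    (hp : p ∈ Sdual Ω F G Zp Yp y0) (hΔ0 : 0 ∈ graph Δ)
    (hΔ : graph Δ \ {0} ⊆ {q : Z × Y | 0 < -(p.1 q.1) + p.2 q.2}) :
    LagrangeMultiplier Ω F G Zp Yp Δ y0 :=
  ⟨closure_mono (vmap_zero_subset_umap hΔ0) hy0.1, fun _ hu =>
    hy0.2 ⟨umap_inter_sub_subset_vmap_zero hYp hZp hp hΔ hu, hu.2⟩⟩

end

theorem stmt_9 (Ω : Set X) (F : X → Set Y) (G : X → Set Z) (Zp : Set Z) (Yp : Set Y)
    (hSt : StandingHyp Ω F G Zp Yp)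
    (y0 : Y) (hy0 : Nondominated Ω F G Zp Yp y0)
    (Δ : Z → Set Y) (hΔ : Δ ∈ Gamma Ω F G Zp Yp y0)
    (hSl : Slater Ω F G Zp) :
    y0 ∈ closure (Umap Ω F G Zp Δ) ∧
      Umap Ω F G Zp Δ ∩ ({y0} - Yp) ⊆ {y0} + Yp := by
  obtain ⟨p, ⟨hp, -⟩, ⟨-, -, hΔcone, -⟩, hΔpos⟩ := Set.mem_iUnion₂.1 hΔ
  exact stmt_9_general hSt.1.zero_mem hSt.2.2.2.2.1.zero_mem hy0 hp hΔcone.zero_mem hΔpos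

end Paper
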